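/- arXiv:math/0503644 — 2 statements merged into one kernel-verified Lean document; each statement's English description precedes it below -/
import Mathlib

section
/- Let (K,d) be a metric space in which every set of finite diameter is relatively compact, and let (K_{i(e)}, w_e, p_e)_{e∈E} be a contractive Markov system with average contracting rate a ∈ (0,1) such that K_1,…,K_N are nonempty open subsets partitioning K and each restriction p_e|_{K_{i(e)}} is continuous on K_{i(e)}. Let μ be an invariant Borel probability measure of the system. Then μ is the unique invariant Borel probability measure if and only if for every x ∈ K and every bounded continuous function g : K → ℝ, the Cesàro averages (1/n)∑_{k=1}^n (U^k g)(x) converge to ∫ g dμ as n → ∞. -/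
open MeasureTheory Filter Topology
open scoped ENNReal

/-- A contractive Markov system (CMS) on a metric space `K`, with vertex set `Fin N`
and (finite) edge set `E`. -/
structure CMS (K : Type*) [MetricSpace K] [MeasurableSpace K]
    (N : ℕ) (E : Type*) [Fintype E] where
  ι : E → Fin N
  τ : E → Fin N
  Ks : Fin N → Set K
  Ks_nonempty : ∀ i, (Ks i).Nonempty
  Ks_meas : ∀ i, MeasurableSet (Ks i)
  Ks_disj : ∀ i j, i ≠ j → Disjoint (Ks i) (Ks j)
  Ks_cover : (⋃ i, Ks i) = Set.univ
  w : E → K → K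
  w_meas : ∀ e, Measurable (w e)
  w_maps : ∀ e, Set.MapsTo (w e) (Ks (ι e)) (Ks (τ e))
  p : E → K → ℝ
  p_meas : ∀ e, Measurable (p e)
  p_nonneg : ∀ e x, 0 ≤ p e x
  p_sum_one : ∀ x, ∑ e, p e x = 1
  p_zero : ∀ e x, x ∉ Ks (ι e) → p e x = 0
  a : ℝ
  a_pos : 0 < a
  a_lt_one : a < 1
  contractive : ∀ i, ∀ x ∈ Ks i, ∀ y ∈ Ks i,
    ∑ e, p e x * dist (w e x) (w e y) ≤ a * dist x y

namespace CMS

variable {K : Type*} [MetricSpace K] [MeasurableSpace K]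
  {N : ℕ} {E : Type*} [Fintype E]

/-- The Markov operator `U` acting on functions. -/
noncomputable def Ufun (S : CMS K N E) (f : K → ℝ) : K → ℝ :=
  fun x => ∑ e, S.p e x * f (S.w e x)

/-- The adjoint Markov operator `U*` acting on measures. -/
noncomputable def adjoint (S : CMS K N E) (ν : Measure K) : Measure K :=
  ν.bind fun x => ∑ e, ENNReal.ofReal (S.p e x) • Measure.dirac (S.w e x)

/-- The weight `p_{e₁}(x) p_{e₂}(w_{e₁} x) ⋯` of a cylinder `[e₁, …, e_k]` started at `x`. -/
noncomputable def cylWeight (S : CMS K N E) : K → List E → ℝ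
  | _, [] => 1
  | x, e :: es => S.p e x * S.cylWeight (S.w e x) es

/-- `M` is the generalized Markov measure associated with the CMS and invariant measure `μ`. -/
def IsGMarkovMeasure [MeasurableSpace E] (S : CMS K N E)
    (μ : Measure K) (M : Measure (ℤ → E)) : Prop :=
  IsProbabilityMeasure M ∧
  ∀ (m : ℤ) (es : List E),
    M {σ | ∀ j : Fin es.length, σ (m + (j : ℕ)) = es.get j} =
      ENNReal.ofReal (∫ x, S.cylWeight x es ∂μ)

/-- `comp S σ n = w_{σ 0} ∘ w_{σ (-1)} ∘ ⋯ ∘ w_{σ (-n)}`. -/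
noncomputable def comp (S : CMS K N E) (σ : ℤ → E) : ℕ → K → K
  | 0, x => S.w (σ 0) x
  | n + 1, x => S.comp σ n (S.w (σ (-((n : ℤ) + 1))) x)

/-- `codeSeq S xs σ n = w_{σ 0} ∘ ⋯ ∘ w_{σ (-n)} (x_{i(σ (-n))})`. -/
noncomputable def codeSeq (S : CMS K N E) (xs : Fin N → K) (σ : ℤ → E) (n : ℕ) : K :=
  S.comp σ n (xs (S.ι (σ (-(n : ℤ)))))

end CMS

/-- The left shift `S` on `Σ = E^ℤ`. -/
def shiftL (E : Type*) : (ℤ → E) → ℤ → E := fun σ j => σ (j + 1)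

/-- The `n`-fold left shift `S^n` on `Σ = E^ℤ`, `n ∈ ℤ`. -/
def shiftZ (E : Type*) (n : ℤ) : (ℤ → E) → ℤ → E := fun σ j => σ (j + n)

namespace CMS

variable {K : Type*} [MetricSpace K] [MeasurableSpace K]
  {N : ℕ} {E : Type*} [Fintype E]

/-- The subshift `Σ_G` of (two-sided) paths of the directed multigraph. -/
def SigmaG (S : CMS K N E) : Set (ℤ → E) :=
  {σ | ∀ j : ℤ, S.τ (σ j) = S.ι (σ (j + 1))}

/-- The set `D` of paths where the coding limit exists. -/
def Dset (S : CMS K N E) (xs : Fin N → K) : Set (ℤ → E) :=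
  {σ ∈ S.SigmaG | ∃ L : K, Tendsto (S.codeSeq xs σ) atTop (nhds L)}

/-- `Y = ⋂_{n ∈ ℤ} S^n(D)`. -/
def Yset (S : CMS K N E) (xs : Fin N → K) : Set (ℤ → E) :=
  ⋂ n : ℤ, shiftZ E n '' S.Dset xs

/-- The coding map `F`. -/
noncomputable def F [Nonempty K] (S : CMS K N E) (xs : Fin N → K) (σ : ℤ → E) : K :=
  limUnder atTop (S.codeSeq xs σ)

end CMS

/-- The modulus of uniform continuity of `f` on the set `A`. -/
noncomputable def modulusOn {K : Type*} [MetricSpace K] (f : K → ℝ) (A : Set K) (t : ℝ) : ℝ :=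
  sSup {s | ∃ x ∈ A, ∃ y ∈ A, dist x y ≤ t ∧ s = |f x - f y|}

/-- Dini-continuity of `f` on `A`: `∫_0^c φ(t)/t dt < ∞` for some `c > 0`. -/
def DiniOn {K : Type*} [MetricSpace K] (f : K → ℝ) (A : Set K) : Prop :=
  ∃ c > 0, ∫⁻ t in Set.Ioc (0 : ℝ) c, ENNReal.ofReal (modulusOn f A t / t) < ⊤


namespace CMS

section aux

variable {K : Type*} [MetricSpace K] [MeasurableSpace K]
  {N : ℕ} {E : Type*} [Fintype E]

/-- The transition kernel. -/
noncomputable def ker (S : CMS K N E) : ProbabilityTheory.Kernel K K where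
  toFun := fun x => ∑ e, ENNReal.ofReal (S.p e x) • Measure.dirac (S.w e x)
  measurable' := by
    refine Measure.measurable_of_measurable_coe _ fun s hs => ?_
    simp only [Measure.coe_finsetSum, Finset.sum_apply, Measure.smul_apply, smul_eq_mul]
    refine Finset.measurable_sum _ fun e _ => ?_
    refine (ENNReal.measurable_ofReal.comp (S.p_meas e)).mul ?_
    exact (Measure.measurable_coe hs).comp (Measure.measurable_dirac.comp (S.w_meas e))

lemma ker_apply (S : CMS K N E) (x : K) :
    S.ker x = ∑ e, ENNReal.ofReal (S.p e x) • Measure.dirac (S.w e x) := rfl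

lemma adjoint_eq (S : CMS K N E) (ν : Measure K) : S.adjoint ν = ν.bind S.ker := rfl

instance (S : CMS K N E) : ProbabilityTheory.IsMarkovKernel S.ker := by
  refine ⟨fun x => ⟨?_⟩⟩
  rw [ker_apply]
  simp only [Measure.coe_finsetSum, Finset.sum_apply, Measure.smul_apply, smul_eq_mul,
    measure_univ, mul_one]
  rw [← ENNReal.ofReal_sum_of_nonneg (fun e _ => S.p_nonneg e x), S.p_sum_one]
  simp

instance adjoint_prob (S : CMS K N E) (ν : Measure K) [IsProbabilityMeasure ν] :
    IsProbabilityMeasure (S.adjoint ν) := by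
  rw [adjoint_eq]; infer_instance

lemma iter_prob (S : CMS K N E) (ν : Measure K) [IsProbabilityMeasure ν] (k : ℕ) :
    IsProbabilityMeasure (S.adjoint^[k] ν) := by
  induction k with
  | zero => simpa
  | succ k ih => rw [Function.iterate_succ_apply']; infer_instance

lemma lintegral_adjoint (S : CMS K N E) (ν : Measure K) {f : K → ℝ≥0∞} (hf : Measurable f) :
    ∫⁻ x, f x ∂(S.adjoint ν) = ∫⁻ x, ∑ e, ENNReal.ofReal (S.p e x) * f (S.w e x) ∂ν := by
  rw [adjoint_eq, Measure.lintegral_bind S.ker.aemeasurable hf.aemeasurable]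
  refine lintegral_congr fun x => ?_
  rw [ker_apply, lintegral_finsetSum_measure]
  refine Finset.sum_congr rfl fun e _ => ?_
  rw [lintegral_smul_measure, lintegral_dirac' _ hf, smul_eq_mul]

lemma integrable_bdd {ν : Measure K} [IsProbabilityMeasure ν] {g : K → ℝ} {C : ℝ}
    (hg : Measurable g) (hC : ∀ y, |g y| ≤ C) : Integrable g ν :=
  Integrable.of_bound hg.aestronglyMeasurable C (ae_of_all _ hC)

lemma integral_adjoint (S : CMS K N E) (ν : Measure K) [IsProbabilityMeasure ν]
    {g : K → ℝ} {C : ℝ} (hg : Measurable g) (hC : ∀ y, |g y| ≤ C) :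
    ∫ x, g x ∂(S.adjoint ν) = ∫ x, S.Ufun g x ∂ν := by
  have h1 : S.adjoint ν = (ProbabilityTheory.Kernel.comp S.ker (ProbabilityTheory.Kernel.const Unit ν)) () := by
    rw [ProbabilityTheory.Kernel.comp_apply, adjoint_eq]; rfl
  have h2 : Integrable g ((ProbabilityTheory.Kernel.comp S.ker (ProbabilityTheory.Kernel.const Unit ν)) ()) :=
    integrable_bdd hg hC
  rw [h1, ProbabilityTheory.Kernel.integral_comp h2]
  simp only [ProbabilityTheory.Kernel.const_apply]
  refine integral_congr_ae (ae_of_all _ fun x => ?_)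
  simp only [ker_apply, Ufun]
  rw [integral_finsetSum_measure]
  · refine Finset.sum_congr rfl fun e _ => ?_
    rw [integral_smul_measure, integral_dirac' _ _ hg.stronglyMeasurable,
      ENNReal.toReal_ofReal (S.p_nonneg e x), smul_eq_mul]
  · intro e _
    exact (integrable_bdd hg hC).smul_measure ENNReal.ofReal_ne_top

lemma Ufun_meas (S : CMS K N E) {g : K → ℝ} (hg : Measurable g) : Measurable (S.Ufun g) :=
  Finset.measurable_sum _ fun e _ => (S.p_meas e).mul (hg.comp (S.w_meas e))

lemma Ufun_bdd (S : CMS K N E) {g : K → ℝ} {C : ℝ} (hC : ∀ y, |g y| ≤ C) (x : K) :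
    |S.Ufun g x| ≤ C := by
  calc |S.Ufun g x| ≤ ∑ e, |S.p e x * g (S.w e x)| := Finset.abs_sum_le_sum_abs _ _
    _ ≤ ∑ e, S.p e x * C := by
      refine Finset.sum_le_sum fun e _ => ?_
      rw [abs_mul, abs_of_nonneg (S.p_nonneg e x)]
      exact mul_le_mul_of_nonneg_left (hC _) (S.p_nonneg e x)
    _ = C := by rw [← Finset.sum_mul, S.p_sum_one, one_mul]

lemma iter_bdd (S : CMS K N E) {g : K → ℝ} {C : ℝ} (hg : Measurable g) (hC : ∀ y, |g y| ≤ C)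
    (k : ℕ) : Measurable (S.Ufun^[k] g) ∧ ∀ y, |S.Ufun^[k] g y| ≤ C := by
  induction k with
  | zero => exact ⟨hg, hC⟩
  | succ k ih =>
    rw [Function.iterate_succ_apply']
    exact ⟨S.Ufun_meas ih.1, S.Ufun_bdd ih.2⟩

lemma integral_iter (S : CMS K N E) (k : ℕ) : ∀ (ν : Measure K) [IsProbabilityMeasure ν]
    {g : K → ℝ} {C : ℝ} (_ : Measurable g) (_ : ∀ y, |g y| ≤ C),
    ∫ x, g x ∂(S.adjoint^[k] ν) = ∫ x, S.Ufun^[k] g x ∂ν := by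
  induction k with
  | zero => intros; rfl
  | succ k ih =>
    intro ν _ g C hg hC
    rw [Function.iterate_succ_apply, ih (S.adjoint ν) hg hC, Function.iterate_succ_apply',
      S.integral_adjoint ν (S.iter_bdd hg hC k).1 (S.iter_bdd hg hC k).2]

/-- The Feller property. -/
lemma Ufun_cont (S : CMS K N E) (hOpen : ∀ i, IsOpen (S.Ks i))
    (hCont : ∀ e, ContinuousOn (S.p e) (S.Ks (S.ι e)))
    {g : K → ℝ} {C : ℝ} (hg : Continuous g) (hC : ∀ y, |g y| ≤ C) :
    Continuous (S.Ufun g) := by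
  rw [continuous_iff_continuousAt]
  intro x
  obtain ⟨i, hi⟩ : ∃ i, x ∈ S.Ks i := by
    have := S.Ks_cover.symm ▸ Set.mem_univ x
    simpa using this
  have hnhds : S.Ks i ∈ 𝓝 x := (hOpen i).mem_nhds hi
  have key : ∀ e, Tendsto (fun y => S.p e y * g (S.w e y)) (𝓝 x)
      (𝓝 (S.p e x * g (S.w e x))) := by
    intro e
    have hp : Tendsto (S.p e) (𝓝 x) (𝓝 (S.p e x)) := by
      by_cases he : S.ι e = i
      · exact (hCont e).continuousAt (he ▸ hnhds)
      · have hz : ∀ y ∈ S.Ks i, S.p e y = 0 := fun y hy =>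
          S.p_zero e y fun hy' => (S.Ks_disj _ _ he).le_bot ⟨hy', hy⟩
        rw [hz x hi]
        refine tendsto_const_nhds.congr' ?_
        filter_upwards [hnhds] with y hy using (hz y hy).symm
    rcases (S.p_nonneg e x).eq_or_lt with h0 | hpos
    · rw [← h0, zero_mul]
      rw [← h0] at hp
      refine squeeze_zero_norm (a := fun y => S.p e y * C) (fun y => ?_) (by simpa using hp.mul_const C)
      rw [Real.norm_eq_abs, abs_mul, abs_of_nonneg (S.p_nonneg e y)]
      exact mul_le_mul_of_nonneg_left (hC _) (S.p_nonneg e y)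
    · refine hp.mul ((hg.tendsto _).comp ?_)
      rw [tendsto_iff_dist_tendsto_zero]
      refine squeeze_zero' (Eventually.of_forall fun _ => dist_nonneg)
        (g := fun y => S.a * dist y x / S.p e x) ?_ ?_
      · filter_upwards [hnhds] with y hy
        rw [le_div_iff₀ hpos, dist_comm, mul_comm, dist_comm y x]
        refine le_trans ?_ (S.contractive i x hi y hy)
        exact Finset.single_le_sum (f := fun e => S.p e x * dist (S.w e x) (S.w e y))
          (fun e _ => mul_nonneg (S.p_nonneg e x) dist_nonneg) (Finset.mem_univ e)
      · have : Tendsto (fun y => S.a * dist y x / S.p e x) (𝓝 x) (𝓝 (S.a * dist x x / S.p e x)) := by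
          have : Continuous (fun y => S.a * dist y x / S.p e x) := by fun_prop
          exact this.tendsto x
        simpa using this
  exact tendsto_finsetSum _ fun e _ => key e

/-- The Lyapunov function. -/
noncomputable def lyap (S : CMS K N E) (x : K) : ℝ≥0∞ :=
  ∑ i, (S.Ks i).indicator (fun y => edist y (S.Ks_nonempty i).some) x

lemma lyap_eq (S : CMS K N E) {i : Fin N} {x : K} (hx : x ∈ S.Ks i) :
    S.lyap x = edist x (S.Ks_nonempty i).some := by
  unfold lyap
  rw [Finset.sum_eq_single i]
  · simp [hx]
  · intro j _ hj
    exact Set.indicator_of_notMem (fun h => (S.Ks_disj _ _ hj).le_bot ⟨h, hx⟩) _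
  · simp

lemma exists_mem (S : CMS K N E) (x : K) : ∃ i, x ∈ S.Ks i := by
  have := S.Ks_cover.symm ▸ Set.mem_univ x
  simpa using this

lemma lyap_meas [OpensMeasurableSpace K] (S : CMS K N E) : Measurable S.lyap := by
  unfold lyap
  refine Finset.measurable_sum _ fun i _ => Measurable.indicator ?_ (S.Ks_meas i)
  exact (continuous_id.edist continuous_const).measurable

/-- The drift constant. -/
noncomputable def drift (S : CMS K N E) : ℝ :=
  ∑ e, dist (S.w e (S.Ks_nonempty (S.ι e)).some) (S.Ks_nonempty (S.τ e)).some

lemma lyap_drift (S : CMS K N E) (x : K) :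
    ∑ e, ENNReal.ofReal (S.p e x) * S.lyap (S.w e x) ≤
      ENNReal.ofReal S.a * S.lyap x + ENNReal.ofReal S.drift := by
  obtain ⟨i, hi⟩ := S.exists_mem x
  have hD : 0 ≤ S.drift := Finset.sum_nonneg fun _ _ => dist_nonneg
  rw [S.lyap_eq hi, edist_dist, ← ENNReal.ofReal_mul S.a_pos.le,
    ← ENNReal.ofReal_add (mul_nonneg S.a_pos.le dist_nonneg) hD]
  set z := (S.Ks_nonempty i).some with hz
  have h1 : ∀ e, ENNReal.ofReal (S.p e x) * S.lyap (S.w e x) ≤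
      ENNReal.ofReal (S.p e x * dist (S.w e x) (S.w e z) +
        dist (S.w e (S.Ks_nonempty (S.ι e)).some) (S.Ks_nonempty (S.τ e)).some) := by
    intro e
    by_cases he : S.ι e = i
    · subst he
      rw [S.lyap_eq (S.w_maps e hi), edist_dist, ← ENNReal.ofReal_mul (S.p_nonneg e x)]
      refine ENNReal.ofReal_le_ofReal ?_
      have hp1 : S.p e x ≤ 1 := by
        rw [← S.p_sum_one x]
        exact Finset.single_le_sum (f := fun e => S.p e x) (fun e _ => S.p_nonneg e x)
          (Finset.mem_univ e)
      have ht := dist_triangle (S.w e x) (S.w e z) (S.Ks_nonempty (S.τ e)).some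
      have := mul_le_mul_of_nonneg_left ht (S.p_nonneg e x)
      have h3 : S.p e x * dist (S.w e z) (S.Ks_nonempty (S.τ e)).some ≤
        1 * dist (S.w e z) (S.Ks_nonempty (S.τ e)).some :=
        mul_le_mul_of_nonneg_right hp1 dist_nonneg
      linarith
    · rw [S.p_zero e x fun h => (S.Ks_disj _ _ he).le_bot ⟨h, hi⟩]
      simp
  refine (Finset.sum_le_sum fun e _ => h1 e).trans ?_
  rw [← ENNReal.ofReal_sum_of_nonneg fun e _ =>
    add_nonneg (mul_nonneg (S.p_nonneg e x) dist_nonneg) dist_nonneg]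
  refine ENNReal.ofReal_le_ofReal ?_
  rw [Finset.sum_add_distrib]
  exact add_le_add (S.contractive i x hi z (S.Ks_nonempty i).some_mem) le_rfl

lemma lyap_iter [OpensMeasurableSpace K] (S : CMS K N E) (x : K) :
    ∃ M : ℝ, ∀ k, ∫⁻ y, S.lyap y ∂(S.adjoint^[k] (Measure.dirac x)) ≤ ENNReal.ofReal M := by
  obtain ⟨i, hi⟩ := S.exists_mem x
  have ha := S.a_lt_one
  have hD : 0 ≤ S.drift := Finset.sum_nonneg fun _ _ => dist_nonneg
  have hq : 0 ≤ S.drift / (1 - S.a) := div_nonneg hD (by linarith)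
  set M := dist x (S.Ks_nonempty i).some + S.drift / (1 - S.a) with hM
  have hM0 : 0 ≤ M := add_nonneg dist_nonneg hq
  have hMM : S.a * M + S.drift ≤ M := by
    have : S.drift = (1 - S.a) * (S.drift / (1 - S.a)) := by
      field_simp [show (1 - S.a) ≠ 0 by linarith]
    have h2 : S.drift ≤ (1 - S.a) * M := by
      refine this.le.trans ?_
      refine mul_le_mul_of_nonneg_left ?_ (by linarith)
      rw [hM]
      linarith [dist_nonneg (x := x) (y := (S.Ks_nonempty i).some)]
    linarith
  refine ⟨M, fun k => ?_⟩
  induction k with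
  | zero =>
    rw [Function.iterate_zero, id, lintegral_dirac' _ S.lyap_meas, S.lyap_eq hi, edist_dist]
    exact ENNReal.ofReal_le_ofReal (by linarith)
  | succ k ih =>
    have := S.iter_prob (Measure.dirac x) k
    rw [Function.iterate_succ_apply', S.lintegral_adjoint _ S.lyap_meas]
    calc _ ≤ ∫⁻ y, ENNReal.ofReal S.a * S.lyap y + ENNReal.ofReal S.drift
            ∂(S.adjoint^[k] (Measure.dirac x)) := lintegral_mono fun y => S.lyap_drift y
      _ = ENNReal.ofReal S.a * ∫⁻ y, S.lyap y ∂(S.adjoint^[k] (Measure.dirac x))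
            + ENNReal.ofReal S.drift := by
          rw [lintegral_add_right _ measurable_const, lintegral_const_mul _ S.lyap_meas]
          simp
      _ ≤ ENNReal.ofReal S.a * ENNReal.ofReal M + ENNReal.ofReal S.drift := by gcongr
      _ ≤ ENNReal.ofReal M := by
          rw [← ENNReal.ofReal_mul S.a_pos.le,
            ← ENNReal.ofReal_add (mul_nonneg S.a_pos.le hM0) hD]
          exact ENNReal.ofReal_le_ofReal hMM

/-- Cesàro average measures. -/
noncomputable def ces (S : CMS K N E) (x : K) (n : ℕ) : Measure K :=
  ((n + 1 : ℕ) : ℝ≥0∞)⁻¹ • ∑ k ∈ Finset.Icc 1 (n + 1), S.adjoint^[k] (Measure.dirac x)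

instance ces_prob (S : CMS K N E) (x : K) (n : ℕ) : IsProbabilityMeasure (S.ces x n) := by
  constructor
  unfold ces
  have : ∀ k, (S.adjoint^[k] (Measure.dirac x)) Set.univ = 1 := fun k =>
    (S.iter_prob (Measure.dirac x) k).measure_univ
  simp only [Measure.smul_apply, Measure.coe_finsetSum, Finset.sum_apply, this, smul_eq_mul]
  rw [Finset.sum_const, Nat.card_Icc, nsmul_eq_mul, mul_one, Nat.add_sub_cancel]
  exact ENNReal.inv_mul_cancel (by simp) (ENNReal.natCast_ne_top _)

lemma ces_lyap [OpensMeasurableSpace K] (S : CMS K N E) (x : K) :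
    ∃ M : ℝ, ∀ n, ∫⁻ y, S.lyap y ∂(S.ces x n) ≤ ENNReal.ofReal M := by
  obtain ⟨M, hM⟩ := S.lyap_iter x
  refine ⟨M, fun n => ?_⟩
  unfold ces
  rw [lintegral_smul_measure, lintegral_finsetSum_measure, smul_eq_mul]
  calc _ ≤ ((n + 1 : ℕ) : ℝ≥0∞)⁻¹ * ∑ k ∈ Finset.Icc 1 (n + 1), ENNReal.ofReal M := by
        gcongr with k _
        exact hM k
    _ = ENNReal.ofReal M := by
        rw [Finset.sum_const, Nat.card_Icc, nsmul_eq_mul, Nat.add_sub_cancel, ← mul_assoc,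
          ENNReal.inv_mul_cancel (by simp) (ENNReal.natCast_ne_top _), one_mul]

lemma ces_integral (S : CMS K N E) (x : K) (n : ℕ) {g : K → ℝ} {C : ℝ} (hg : Measurable g)
    (hC : ∀ y, |g y| ≤ C) :
    ∫ y, g y ∂(S.ces x n) =
      (∑ k ∈ Finset.Icc 1 (n + 1), S.Ufun^[k] g x) / ((n + 1 : ℕ) : ℝ) := by
  unfold ces
  rw [integral_smul_measure, integral_finsetSum_measure]
  · rw [smul_eq_mul, ENNReal.toReal_inv, ENNReal.toReal_natCast, div_eq_inv_mul]
    congr 1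
    refine Finset.sum_congr rfl fun k _ => ?_
    rw [S.integral_iter k _ hg hC, integral_dirac' _ _ (S.iter_bdd hg hC k).1.stronglyMeasurable]
  · intro k _
    have := S.iter_prob (Measure.dirac x) k
    exact integrable_bdd hg hC

lemma tight [OpensMeasurableSpace K] (S : CMS K N E)
    (hProper : ∀ A : Set K, Bornology.IsBounded A → IsCompact (closure A)) (x : K) :
    IsTightMeasureSet (Set.range (S.ces x)) := by
  rw [isTightMeasureSet_iff_exists_isCompact_measure_compl_le]
  intro ε hε
  obtain ⟨M, hM⟩ := S.ces_lyap x
  obtain ⟨R, hR0, hR⟩ : ∃ R : ℝ, 0 < R ∧ ENNReal.ofReal M / ENNReal.ofReal R ≤ ε := by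
    by_cases htop : ε = ⊤
    · exact ⟨1, one_pos, by simp [htop]⟩
    have he : 0 < ε.toReal := ENNReal.toReal_pos hε.ne' htop
    refine ⟨(|M| + 1) / ε.toReal, by positivity, ?_⟩
    rw [← ENNReal.ofReal_div_of_pos (by positivity)]
    rw [← ENNReal.ofReal_toReal htop]
    refine ENNReal.ofReal_le_ofReal ?_
    rw [ENNReal.ofReal_toReal htop, div_le_iff₀ (by positivity)]
    rw [mul_div_cancel₀ _ he.ne']
    linarith [le_abs_self M]
  refine ⟨closure {y | S.lyap y < ENNReal.ofReal R}, hProper _ ?_, ?_⟩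
  · refine Bornology.IsBounded.subset (s := {y | S.lyap y < ENNReal.ofReal R})
      (t := ⋃ i, Metric.ball (S.Ks_nonempty i).some R) ?_ ?_
    · exact (Bornology.isBounded_iUnion).2 fun i => Metric.isBounded_ball
    · intro y hy
      obtain ⟨i, hi⟩ := S.exists_mem y
      rw [Set.mem_ofPred_eq, S.lyap_eq hi, edist_dist, ENNReal.ofReal_lt_ofReal_iff hR0] at hy
      exact Set.mem_iUnion.2 ⟨i, hy⟩
  · rintro _ ⟨n, rfl⟩
    calc S.ces x n (closure {y | S.lyap y < ENNReal.ofReal R})ᶜ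
        ≤ S.ces x n {y | ENNReal.ofReal R ≤ S.lyap y} := by
          refine measure_mono fun y hy => ?_
          have : y ∉ {y | S.lyap y < ENNReal.ofReal R} := fun h => hy (subset_closure h)
          simpa using this
      _ ≤ (∫⁻ y, S.lyap y ∂(S.ces x n)) / ENNReal.ofReal R :=
          meas_ge_le_lintegral_div S.lyap_meas.aemeasurable (by simpa using hR0)
            ENNReal.ofReal_ne_top
      _ ≤ ENNReal.ofReal M / ENNReal.ofReal R := by gcongr; exact hM n
      _ ≤ ε := hR

lemma ces_diff (S : CMS K N E) (x : K) {g : K → ℝ} {C : ℝ} (hg : Measurable g)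
    (hC : ∀ y, |g y| ≤ C) :
    Tendsto (fun n => ∫ y, S.Ufun g y ∂(S.ces x n) - ∫ y, g y ∂(S.ces x n)) atTop (𝓝 0) := by
  have h : ∀ n, ∫ y, S.Ufun g y ∂(S.ces x n) - ∫ y, g y ∂(S.ces x n) =
      (S.Ufun^[n + 2] g x - S.Ufun^[1] g x) / ((n + 1 : ℕ) : ℝ) := by
    intro n
    rw [S.ces_integral x n (S.Ufun_meas hg) (S.Ufun_bdd hC), S.ces_integral x n hg hC, ← sub_div]
    congr 1
    rw [← Finset.sum_sub_distrib]
    simp only [← Function.iterate_succ_apply]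
    rw [← Finset.Ico_succ_right_eq_Icc]
    exact Finset.sum_Ico_sub (fun k => S.Ufun^[k] g x) (by simp)
  simp only [h]
  have h0 : Tendsto (fun n : ℕ => (2 * C) / ((n + 1 : ℕ) : ℝ)) atTop (𝓝 0) :=
    (tendsto_const_div_atTop_nhds_zero_nat (2 * C)).comp (tendsto_add_atTop_nat 1)
  refine squeeze_zero_norm (fun n => ?_) h0
  rw [norm_div, Real.norm_eq_abs, Real.norm_of_nonneg (by positivity)]
  refine div_le_div_of_nonneg_right ?_ (by positivity)
  have h1 := (S.iter_bdd hg hC (n + 2)).2 x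
  have h2 := (S.iter_bdd hg hC 1).2 x
  rw [abs_le] at *
  constructor <;> linarith [h1.1, h1.2, h2.1, h2.2]

end aux

end CMS

-- stmt 2
theorem cms_unique_iff_cesaro
    {K : Type*} [MetricSpace K] [MeasurableSpace K] [BorelSpace K]
    {N : ℕ} {E : Type*} [Fintype E] (S : CMS K N E)
    (hProper : ∀ A : Set K, Bornology.IsBounded A → IsCompact (closure A))
    (hOpen : ∀ i, IsOpen (S.Ks i))
    (hCont : ∀ e, ContinuousOn (S.p e) (S.Ks (S.ι e)))
    (μ : Measure K) (hμ : IsProbabilityMeasure μ) (hinv : S.adjoint μ = μ) :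
    (∀ ν : Measure K, IsProbabilityMeasure ν → S.adjoint ν = ν → ν = μ) ↔
      (∀ (x : K) (g : K → ℝ), Continuous g → (∃ C : ℝ, ∀ y, |g y| ≤ C) →
        Tendsto (fun n : ℕ => (∑ k ∈ Finset.Icc 1 n, (S.Ufun)^[k] g x) / (n : ℝ))
          atTop (nhds (∫ y, g y ∂μ))) := by
  constructor
  · intro huniq x g hg ⟨C, hC⟩
    rw [← tendsto_add_atTop_iff_nat 1]
    simp only [← S.ces_integral x _ hg.measurable hC]
    rw [tendsto_iff_ultrafilter]
    intro f hf
    let P : ℕ → ProbabilityMeasure K := fun n => ⟨S.ces x n, inferInstance⟩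
    have hcomp : IsCompact (closure (Set.range P)) := by
      apply isCompact_closure_of_isTightMeasureSet
      convert S.tight hProper x using 1
      ext ν
      constructor
      · rintro ⟨_, ⟨n, rfl⟩, rfl⟩
        exact ⟨n, rfl⟩
      · rintro ⟨n, rfl⟩
        exact ⟨P n, ⟨n, rfl⟩, rfl⟩
    obtain ⟨ν, -, hν⟩ := hcomp.ultrafilter_le_nhds' (f.map P)
      (Filter.mem_map.2 (Filter.Eventually.of_forall fun n => subset_closure ⟨n, rfl⟩))
    have hν' : Tendsto P f (𝓝 ν) := hν
    rw [ProbabilityMeasure.tendsto_iff_forall_integral_tendsto] at hν'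
    have hlim : ∀ (h : K → ℝ) (D : ℝ), Continuous h → (∀ y, |h y| ≤ D) →
        Tendsto (fun n => ∫ y, h y ∂(S.ces x n)) f (𝓝 (∫ y, h y ∂(ν : Measure K))) := by
      intro h D hh hD
      exact hν' (BoundedContinuousFunction.ofNormedAddCommGroup h hh D hD)
    have hinvν : S.adjoint (ν : Measure K) = ν := by
      apply ext_of_forall_integral_eq_of_IsFiniteMeasure
      intro h
      have hD : ∀ y, |h y| ≤ ‖h‖ := fun y => h.norm_coe_le_norm y
      rw [S.integral_adjoint _ h.continuous.measurable hD]
      have l1 := hlim _ _ (S.Ufun_cont hOpen hCont h.continuous hD) (S.Ufun_bdd hD)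
      have l2 := hlim _ _ h.continuous hD
      have l3 := (S.ces_diff x h.continuous.measurable hD).mono_left hf
      exact sub_eq_zero.1 (tendsto_nhds_unique (l1.sub l2) l3)
    have := hlim g C hg hC
    rwa [huniq ν inferInstance hinvν] at this
  · intro hces ν hν hνinv
    apply ext_of_forall_integral_eq_of_IsFiniteMeasure
    intro h
    have hD : ∀ y, |h y| ≤ ‖h‖ := fun y => h.norm_coe_le_norm y
    have hm := h.continuous.measurable
    have hit : ∀ k, S.adjoint^[k] ν = ν := fun k => Function.iterate_fixed hνinv k
    have hb : ∀ n x, |∫ y, h y ∂(S.ces x n)| ≤ ‖h‖ := fun n x => by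
      have := norm_integral_le_of_norm_le_const (μ := S.ces x n) (f := fun y => h y) (C := ‖h‖)
        (ae_of_all _ fun y => h.norm_coe_le_norm y)
      simpa using this
    have hT : ∀ x, Tendsto (fun n : ℕ => ∫ y, h y ∂(S.ces x n)) atTop (𝓝 (∫ y, h y ∂μ)) := by
      intro x
      have := hces x h h.continuous ⟨_, hD⟩
      rw [← tendsto_add_atTop_iff_nat 1] at this
      simpa only [← S.ces_integral x _ hm hD] using this
    have hconv : Tendsto (fun n : ℕ => ∫ x, (∫ y, h y ∂(S.ces x n)) ∂ν) atTop
        (𝓝 (∫ _, (∫ y, h y ∂μ) ∂ν)) := by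
      refine tendsto_integral_of_dominated_convergence (fun _ => ‖h‖) (fun n => ?_)
        (integrable_const _) (fun n => ae_of_all _ fun x => hb n x) (ae_of_all _ hT)
      simp only [S.ces_integral _ _ hm hD]
      exact ((Finset.measurable_sum _ fun k _ =>
        (S.iter_bdd hm hD k).1).div_const _).aestronglyMeasurable
    have hconst : ∀ n : ℕ, ∫ x, (∫ y, h y ∂(S.ces x n)) ∂ν = ∫ y, h y ∂ν := by
      intro n
      simp only [S.ces_integral _ _ hm hD]
      rw [integral_div, integral_finsetSum]
      · have : ∀ k, ∫ x, S.Ufun^[k] h x ∂ν = ∫ y, h y ∂ν := fun k => by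
          rw [← S.integral_iter k ν hm hD, hit]
        simp only [this]
        rw [Finset.sum_const, Nat.card_Icc, nsmul_eq_mul, Nat.add_sub_cancel]
        field_simp
      · intro k _
        exact CMS.integrable_bdd (S.iter_bdd hm hD k).1 (S.iter_bdd hm hD k).2
    simp only [hconst] at hconv
    have := tendsto_nhds_unique hconv tendsto_const_nhds
    simpa using this.symm
end

section
/- Let (K_{i(e)}, w_e, p_e)_{e∈E} be a contractive Markov system with average contracting rate a ∈ (0,1) on a metric space in which every set of finite diameter is relatively compact, with K_1,…,K_N nonempty open sets, each p_e|_{K_{i(e)}} uniformly continuous and bounded below by some δ > 0. Suppose the system has an invariant Borel probability measure μ such that C := ∑_{i=1}^N ∫_{K_i} d(x, x_i) dμ(x) < ∞ for the fixed points x_i ∈ K_i, and suppose M(Y) = 1, where M is the associated generalized Markov measure. Then for every e ∈ E, E_M(1_{{σ : σ_1 = e}} | 𝓕) = p_e ∘ F M-almost everywhere, where F is the coding map and 𝓕 is the σ-algebra generated by the coordinates σ_j, j ≤ 0. -/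
open MeasureTheory Filter Topology
open scoped ENNReal

/-- Entropy of the partition of `Σ = E^ℤ` into cylinders `[e₀, …, e_{n-1}]₀`. -/
noncomputable def cylEnt {E : Type*} [Fintype E] [MeasurableSpace E]
    (Λ : Measure (ℤ → E)) (n : ℕ) : ℝ :=
  ∑ es : Fin n → E, Real.negMulLog ((Λ {σ | ∀ j : Fin n, σ ((j : ℕ) : ℤ) = es j}).toReal)

/-- Kolmogorov–Sinai entropy of the left shift with respect to an invariant measure,
via the generating zero-time partition. -/
noncomputable def KSEntropy {E : Type*} [Fintype E] [MeasurableSpace E]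
    (Λ : Measure (ℤ → E)) : ℝ :=
  ⨅ n : ℕ, cylEnt Λ (n + 1) / ((n : ℝ) + 1)

def ShiftInvariant {E : Type*} [MeasurableSpace E] (Λ : Measure (ℤ → E)) : Prop :=
  Measure.map (shiftL E) Λ = Λ

/-- `∫⁻ (-u) dΘ` for an extended-real valued energy function `u ≤ 0`. -/
noncomputable def negPartInt {α : Type*} [MeasurableSpace α]
    (u : α → EReal) (Θ : Measure α) : ℝ≥0∞ :=
  ∫⁻ x, (if u x = ⊥ then (⊤ : ℝ≥0∞) else ENNReal.ofReal (-(u x).toReal)) ∂Θ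

/-- The free energy `h_Θ(S) + Θ(u)`, as an extended real number. -/
noncomputable def freeEnergy {E : Type*} [Fintype E] [MeasurableSpace E]
    (u : (ℤ → E) → EReal) (Θ : Measure (ℤ → E)) : EReal :=
  (KSEntropy Θ : EReal) - ((negPartInt u Θ : ℝ≥0∞) : EReal)

/-- The pressure `P(u) = sup_Θ (h_Θ(S) + Θ(u))` over shift-invariant probability measures. -/
noncomputable def pressure {E : Type*} [Fintype E] [MeasurableSpace E]
    (u : (ℤ → E) → EReal) : EReal :=
  ⨆ (Θ : Measure (ℤ → E)) (_ : IsProbabilityMeasure Θ ∧ ShiftInvariant Θ), freeEnergy u Θ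

/-- `Λ` is an equilibrium state for the energy function `u`. -/
def IsEquilibrium {E : Type*} [Fintype E] [MeasurableSpace E]
    (u : (ℤ → E) → EReal) (Λ : Measure (ℤ → E)) : Prop :=
  IsProbabilityMeasure Λ ∧ ShiftInvariant Λ ∧ freeEnergy u Λ = pressure u

/-- Extended-real logarithm, `elog x = ⊥` for `x ≤ 0`. -/
noncomputable def elog (x : ℝ) : EReal :=
  if x ≤ 0 then (⊥ : EReal) else ((Real.log x : ℝ) : EReal)

/-- The σ-algebra `𝓕` on `E^ℤ` generated by the coordinates `σ_j`, `j ≤ 0`. -/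
def pastAlg (E : Type*) [MeasurableSpace E] : MeasurableSpace (ℤ → E) :=
  MeasurableSpace.comap (fun (σ : ℤ → E) (j : {j : ℤ // j ≤ 0}) => σ j.1) inferInstance

/-- `g_Λ(σ) = g_{Λ σ₁}(σ)` where `g_{Λ e} = E_Λ(1_{{σ₁ = e}} | 𝓕)`. -/
noncomputable def gfun {E : Type*} [Fintype E] [MeasurableSpace E]
    (Λ : Measure (ℤ → E)) (σ : ℤ → E) : ℝ :=
  (Λ[Set.indicator {τ : ℤ → E | τ 1 = σ 1} (fun _ => (1 : ℝ)) | pastAlg E]) σ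


namespace CMSProof

open CMS

variable {K : Type*} [MetricSpace K] [MeasurableSpace K]
  {N : ℕ} {E : Type*} [Fintype E]

/-- Iterated application of the maps along a word. -/
def fw (S : CMS K N E) : K → List E → K
  | x, [] => x
  | x, e :: es => fw S (S.w e x) es

lemma cw_nonneg (S : CMS K N E) (es : List E) : ∀ x, 0 ≤ S.cylWeight x es := by
  induction es with
  | nil => intro x; simp [cylWeight]
  | cons e es ih => intro x; exact mul_nonneg (S.p_nonneg e x) (ih _)

lemma p_le_one (S : CMS K N E) (e : E) (x : K) : S.p e x ≤ 1 := by
  rw [← S.p_sum_one x]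
  exact Finset.single_le_sum (f := fun e => S.p e x) (fun i _ => S.p_nonneg i x)
    (Finset.mem_univ e)

lemma cw_le_one (S : CMS K N E) (es : List E) : ∀ x, S.cylWeight x es ≤ 1 := by
  induction es with
  | nil => intro x; simp [cylWeight]
  | cons e es ih => intro x; exact mul_le_one₀ (p_le_one S e x) (cw_nonneg S es _) (ih _)

lemma cw_meas (S : CMS K N E) (es : List E) : Measurable (fun x => S.cylWeight x es) := by
  induction es with
  | nil => simp only [cylWeight]; exact measurable_const
  | cons e es ih => exact (S.p_meas e).mul (ih.comp (S.w_meas e))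

lemma fw_meas (S : CMS K N E) (es : List E) : Measurable (fun x => fw S x es) := by
  induction es with
  | nil => exact measurable_id
  | cons e es ih => exact ih.comp (S.w_meas e)

lemma cw_concat (S : CMS K N E) (es : List E) (e : E) :
    ∀ x, S.cylWeight x (es ++ [e]) = S.cylWeight x es * S.p e (fw S x es) := by
  induction es with
  | nil => intro x; simp [cylWeight, fw]
  | cons a es ih =>
    intro x
    simp only [List.cons_append, cylWeight, fw, ih, mul_assoc]

lemma mem_of_p_ne (S : CMS K N E) {e : E} {x : K} (h : S.p e x ≠ 0) : x ∈ S.Ks (S.ι e) := by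
  by_contra hx
  exact h (S.p_zero e x hx)

lemma cell_unique (S : CMS K N E) {i j : Fin N} {x : K} (hi : x ∈ S.Ks i) (hj : x ∈ S.Ks j) :
    i = j := by
  by_contra h
  exact Set.disjoint_left.mp (S.Ks_disj i j h) hi hj

lemma same_cell (S : CMS K N E) (es : List E) : ∀ (i : Fin N) (x y : K), x ∈ S.Ks i → y ∈ S.Ks i →
    S.cylWeight x es ≠ 0 → ∃ j, fw S x es ∈ S.Ks j ∧ fw S y es ∈ S.Ks j := by
  induction es with
  | nil => intro i x y hx hy _; exact ⟨i, hx, hy⟩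
  | cons e es ih =>
    intro i x y hx hy h
    have h1 : S.p e x ≠ 0 := left_ne_zero_of_mul h
    have h2 : S.cylWeight (S.w e x) es ≠ 0 := right_ne_zero_of_mul h
    have hi := cell_unique S hx (mem_of_p_ne S h1)
    subst hi
    exact ih (S.τ e) _ _ (S.w_maps e hx) (S.w_maps e hy) h2

lemma sum_cons {k : ℕ} (f : (Fin (k + 1) → E) → ℝ) :
    ∑ es, f es = ∑ e, ∑ es : Fin k → E, f (Fin.cons e es) := by
  rw [← Fintype.sum_prod_type']
  exact (Fintype.sum_equiv (Fin.consEquiv (fun _ => E)) _ _ (fun _ => rfl)).symm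

lemma sum_cw (S : CMS K N E) (k : ℕ) :
    ∀ x, ∑ es : Fin k → E, S.cylWeight x (List.ofFn es) = 1 := by
  induction k with
  | zero => intro x; simp [cylWeight]
  | succ k ih =>
    intro x
    rw [sum_cons]
    simp only [List.ofFn_succ, Fin.cons_zero, Fin.cons_succ, cylWeight]
    simp only [← Finset.mul_sum, ih, mul_one, S.p_sum_one]

lemma contr (S : CMS K N E) (k : ℕ) : ∀ (i : Fin N) (x y : K), x ∈ S.Ks i → y ∈ S.Ks i →
    ∑ es : Fin k → E, S.cylWeight x (List.ofFn es) *
      dist (fw S x (List.ofFn es)) (fw S y (List.ofFn es)) ≤ S.a ^ k * dist x y := by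
  induction k with
  | zero => intro i x y _ _; simp [cylWeight, fw]
  | succ k ih =>
    intro i x y hx hy
    rw [sum_cons]
    simp only [List.ofFn_succ, Fin.cons_zero, Fin.cons_succ, cylWeight, fw]
    simp only [mul_assoc]
    simp only [← Finset.mul_sum]
    calc _ ≤ ∑ e, S.p e x * (S.a ^ k * dist (S.w e x) (S.w e y)) := by
          refine Finset.sum_le_sum fun e _ => ?_
          by_cases h : S.p e x = 0
          · simp [h]
          · have hi := cell_unique S hx (mem_of_p_ne S h)
            subst hi
            exact mul_le_mul_of_nonneg_left (ih _ _ _ (S.w_maps e hx) (S.w_maps e hy))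
              (S.p_nonneg e x)
      _ = S.a ^ k * ∑ e, S.p e x * dist (S.w e x) (S.w e y) := by
          rw [Finset.mul_sum]; exact Finset.sum_congr rfl fun e _ => by ring
      _ ≤ S.a ^ k * (S.a * dist x y) :=
          mul_le_mul_of_nonneg_left (S.contractive i x hx y hy) (pow_nonneg S.a_pos.le k)
      _ = _ := by ring

/-- the weight function bounding the distance to the base points -/
noncomputable def dd (S : CMS K N E) (xs : Fin N → K) (x : K) : ℝ :=
  ∑ i, (S.Ks i).indicator (fun x => dist x (xs i)) x

lemma dd_eq (S : CMS K N E) (xs : Fin N → K) {i : Fin N} {x : K} (hx : x ∈ S.Ks i) :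
    dd S xs x = dist x (xs i) := by
  classical
  unfold dd
  rw [Finset.sum_eq_single i]
  · simp [hx]
  · intro j _ hj
    exact Set.indicator_of_notMem (fun h => hj (cell_unique S h hx)) _
  · simp

lemma dd_int [BorelSpace K] (S : CMS K N E) (xs : Fin N → K) (μ : Measure K)
    (hmom : ∑ i, ∫⁻ x in S.Ks i, ENNReal.ofReal (dist x (xs i)) ∂μ < ⊤) :
    Integrable (dd S xs) μ := by
  unfold dd
  refine integrable_finsetSum _ fun i _ => ?_
  rw [integrable_indicator_iff (S.Ks_meas i)]
  have hm : Measurable (fun x => dist x (xs i)) := (continuous_id.dist continuous_const).measurable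
  refine ⟨hm.aestronglyMeasurable, ?_⟩
  rw [hasFiniteIntegral_iff_ofReal (Eventually.of_forall fun _ => dist_nonneg)]
  exact (ENNReal.sum_lt_top.mp hmom) i (Finset.mem_univ i)

lemma exists_cell (S : CMS K N E) (x : K) : ∃ i, x ∈ S.Ks i := by
  have : x ∈ ⋃ i, S.Ks i := by rw [S.Ks_cover]; trivial
  simpa using this

/-- end point of a word started at its base point -/
noncomputable def hw (S : CMS K N E) (xs : Fin N → K) {n : ℕ} (es : Fin (n + 1) → E) : K :=
  fw S (xs (S.ι (es 0))) (List.ofFn es)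

lemma key_pt (S : CMS K N E) (xs : Fin N → K) (hxs : ∀ i, xs i ∈ S.Ks i) (e : E)
    (ε η : ℝ) (hη : 0 < η) (hε : 0 < ε)
    (h : ∀ x ∈ S.Ks (S.ι e), ∀ y ∈ S.Ks (S.ι e), dist x y < η → dist (S.p e x) (S.p e y) < ε)
    (n : ℕ) (x : K) :
    ∑ es : Fin (n + 1) → E, S.cylWeight x (List.ofFn es) *
      |S.p e (fw S x (List.ofFn es)) - S.p e (hw S xs es)| ≤
      ε + S.a ^ (n + 1) / η * dd S xs x := by
  obtain ⟨i, hi⟩ := exists_cell S x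
  have hp : ∀ u v j, u ∈ S.Ks j → v ∈ S.Ks j → |S.p e u - S.p e v| ≤ ε + dist u v / η := by
    intro u v j hu hv
    have hnn : 0 ≤ dist u v / η := by positivity
    by_cases hj : j = S.ι e
    · subst hj
      by_cases hd : dist u v < η
      · have := h u hu v hv hd
        rw [Real.dist_eq] at this
        linarith
      · have h1 : 1 ≤ dist u v / η := by rw [le_div_iff₀ hη]; linarith
        have : |S.p e u - S.p e v| ≤ 1 := by
          rw [abs_le]
          constructor <;> linarith [p_le_one S e u, p_le_one S e v, S.p_nonneg e u, S.p_nonneg e v]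
        linarith
    · rw [S.p_zero e u (fun h => hj (cell_unique S hu h)),
        S.p_zero e v (fun h => hj (cell_unique S hv h))]
      simp; linarith
  calc _ ≤ ∑ es : Fin (n + 1) → E, (S.cylWeight x (List.ofFn es) * ε +
        1 / η * (S.cylWeight x (List.ofFn es) *
        dist (fw S x (List.ofFn es)) (fw S (xs i) (List.ofFn es)))) := by
        refine Finset.sum_le_sum fun es _ => ?_
        by_cases h0 : S.cylWeight x (List.ofFn es) = 0
        · rw [h0]; simp
        · have hi' : i = S.ι (es 0) := by
            refine cell_unique S hi (mem_of_p_ne S ?_)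
            rw [List.ofFn_succ] at h0
            exact left_ne_zero_of_mul h0
          obtain ⟨j, h1, h2⟩ := same_cell S _ i x (xs i) hi (hxs i) h0
          have := mul_le_mul_of_nonneg_left (hp _ _ j h1 h2) (cw_nonneg S (List.ofFn es) x)
          rw [hw, ← hi']
          refine this.trans (le_of_eq ?_)
          ring
    _ ≤ ε + 1 / η * (S.a ^ (n + 1) * dist x (xs i)) := by
        rw [Finset.sum_add_distrib, ← Finset.sum_mul, sum_cw, one_mul, ← Finset.mul_sum]
        have := mul_le_mul_of_nonneg_left (contr S (n + 1) i x (xs i) hi (hxs i))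
          (by positivity : 0 ≤ 1 / η)
        linarith
    _ = _ := by rw [dd_eq S xs hi]; ring

/-- the word `σ_{m}, …, σ_{m+k-1}` -/
def wd (m : ℤ) (k : ℕ) (σ : ℤ → E) : Fin k → E := fun j => σ (m + (j : ℕ))

lemma comp_eq (S : CMS K N E) (σ : ℤ → E) (n : ℕ) : ∀ x,
    S.comp σ n x = fw S x (List.ofFn (wd (-(n : ℤ)) (n + 1) σ)) := by
  induction n with
  | zero => intro x; simp [comp, wd, fw]
  | succ n ih =>
    intro x
    rw [CMS.comp, ih, List.ofFn_succ (n := n + 1), fw]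
    have h1 : wd (-((n + 1 : ℕ) : ℤ)) (n + 1 + 1) σ 0 = σ (-((n : ℤ) + 1)) := by
      simp [wd]
    have h2 : (fun i : Fin (n + 1) => wd (-((n + 1 : ℕ) : ℤ)) (n + 1 + 1) σ i.succ)
        = wd (-(n : ℤ)) (n + 1) σ := by
      funext i
      simp only [wd, Fin.val_succ]
      congr 1
      push_cast
      ring
    rw [h1, h2]

lemma codeSeq_eq (S : CMS K N E) (xs : Fin N → K) (σ : ℤ → E) (n : ℕ) :
    S.codeSeq xs σ n = hw S xs (wd (-(n : ℤ)) (n + 1) σ) := by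
  rw [CMS.codeSeq, comp_eq, hw]
  simp [wd]


lemma cw_int (S : CMS K N E) (μ : Measure K) [IsProbabilityMeasure μ] (es : List E) :
    Integrable (fun x => S.cylWeight x es) μ := by
  refine Integrable.of_bound (cw_meas S es).aestronglyMeasurable 1 (Eventually.of_forall fun x => ?_)
  rw [Real.norm_eq_abs, abs_of_nonneg (cw_nonneg S es x)]
  exact cw_le_one S es x

lemma M_wd [MeasurableSpace E] (S : CMS K N E) (μ : Measure K) (M : Measure (ℤ → E))
    (hM : S.IsGMarkovMeasure μ M) (m : ℤ) (k : ℕ) (es : Fin k → E) :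
    M {σ | wd m k σ = es} = ENNReal.ofReal (∫ x, S.cylWeight x (List.ofFn es) ∂μ) := by
  rw [← hM.2 m]
  congr 1
  ext σ
  simp only [Set.mem_ofPred_eq, funext_iff, wd]
  constructor
  · intro h j
    have := h (Fin.cast (by simp) j)
    simp only [Fin.val_cast] at this
    rw [this]
    simp [Fin.cast]
  · intro h j
    have := h (Fin.cast (by simp) j)
    simpa using this

lemma sum_M [MeasurableSpace E] (S : CMS K N E) (μ : Measure K) [IsProbabilityMeasure μ]
    (M : Measure (ℤ → E)) (hM : S.IsGMarkovMeasure μ M) (j : ℤ) :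
    ∑ e, M {σ | σ j = e} = 1 := by
  have h : ∀ e, M {σ | σ j = e} = ENNReal.ofReal (∫ x, S.cylWeight x [e] ∂μ) := by
    intro e
    rw [← hM.2 j]
    congr 1
    ext σ
    simp
  simp only [h]
  rw [← ENNReal.ofReal_sum_of_nonneg (fun e _ => integral_nonneg (cw_nonneg S [e])),
    ← integral_finsetSum _ (fun e _ => cw_int S μ [e])]
  simp [cylWeight, S.p_sum_one]

lemma exists_r [MeasurableSpace E] (S : CMS K N E) (μ : Measure K) [IsProbabilityMeasure μ]
    (M : Measure (ℤ → E)) (hM : S.IsGMarkovMeasure μ M) :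
    ∃ r : E → E, (∀ s : Set E, MeasurableSet (r ⁻¹' s)) ∧ ∀ j : ℤ, ∀ᵐ σ ∂M, r (σ j) = σ j := by
  classical
  have := hM.1
  let r : E → E := fun e => Set.Nonempty.some (s := measurableAtom e) ⟨e, mem_measurableAtom_self e⟩
  have hr : ∀ e, r e ∈ measurableAtom e := fun e => Set.Nonempty.some_mem _
  have hrc : ∀ x e, x ∈ measurableAtom e → r x = r e := by
    intro x e hx
    have : measurableAtom x = measurableAtom e := measurableAtom_eq_of_mem hx
    simp only [r, this]
  refine ⟨r, fun s => ?_, fun j => ?_⟩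
  · have : r ⁻¹' s = ⋃ e ∈ r ⁻¹' s, measurableAtom e := by
      ext x
      simp only [Set.mem_preimage, Set.mem_iUnion]
      constructor
      · intro hx
        exact ⟨x, hx, mem_measurableAtom_self x⟩
      · rintro ⟨e, he, hx⟩
        rwa [hrc x e hx]
    rw [this]
    exact MeasurableSet.biUnion (Set.to_countable _)
      fun e _ => MeasurableSet.measurableAtom_of_countable e
  · have key : ∀ e, r e ≠ e → M {σ | σ j = e} = 0 := by
      intro e he
      have hT : M {σ | σ j ∈ measurableAtom e} ≤ M {σ | σ j = r e} := by
        rw [← measure_toMeasurable {σ : ℤ → E | σ j = r e}]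
        refine measure_mono fun σ hσ => ?_
        set Q := toMeasurable M {σ : ℤ → E | σ j = r e}
        have hQ : MeasurableSet Q := measurableSet_toMeasurable _ _
        have hφ : Measurable (fun x : E => Function.update σ j x) := measurable_update σ
        have h1 : r e ∈ (fun x : E => Function.update σ j x) ⁻¹' Q :=
          subset_toMeasurable M _ (by simp)
        have h2 : e ∈ (fun x : E => Function.update σ j x) ⁻¹' Q := by
          by_contra h
          exact mem_of_mem_measurableAtom (hr e) (hφ hQ).compl h h1
        have h3 := mem_of_mem_measurableAtom (x := e) hσ (hφ hQ) h2
        simpa using h3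
      have hTm : MeasurableSet {σ : ℤ → E | σ j ∈ measurableAtom e} :=
        (measurable_pi_apply j) (MeasurableSet.measurableAtom_of_countable e)
      have hc : M {σ | σ j ∈ measurableAtom e}ᶜ ≤
          ∑ e' ∈ (Finset.univ.erase e).erase (r e), M {σ | σ j = e'} := by
        refine le_trans (measure_mono ?_) (measure_biUnion_finset_le _ _)
        intro σ hσ
        simp only [Set.mem_iUnion]
        refine ⟨σ j, ?_, rfl⟩
        simp only [Finset.mem_erase, Finset.mem_univ, and_true]
        constructor
        · intro h; exact hσ (by simp only [Set.mem_ofPred_eq, h]; exact hr e)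
        · intro h; exact hσ (by simp only [Set.mem_ofPred_eq, h]; exact mem_measurableAtom_self e)
      have hsum := sum_M S μ M hM j
      rw [← Finset.add_sum_erase _ _ (Finset.mem_univ e),
        ← Finset.add_sum_erase _ _ (Finset.mem_erase.mpr ⟨he, Finset.mem_univ (r e)⟩)] at hsum
      have h1 := prob_add_prob_compl (μ := M) hTm
      have h2 : M {σ | σ j = e} + 1 ≤ 0 + 1 := by
        rw [zero_add]
        conv_rhs => rw [← hsum]
        rw [← h1]
        gcongr
      exact le_antisymm ((ENNReal.add_le_add_iff_right ENNReal.one_ne_top).mp h2) zero_le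
    rw [ae_iff]
    refine measure_mono_null (t := ⋃ e ∈ {e | r e ≠ e}, {σ | σ j = e}) ?_ ?_
    · intro σ hσ
      simp only [Set.mem_iUnion]
      exact ⟨σ j, hσ, rfl⟩
    · exact (measure_biUnion_null_iff (Set.to_countable _)).mpr fun e he => key e he

lemma wd_ae [MeasurableSpace E] (M : Measure (ℤ → E)) (r : E → E)
    (hr2 : ∀ j : ℤ, ∀ᵐ σ ∂M, r (σ j) = σ j) :
    ∀ᵐ σ ∂M, ∀ j : ℤ, r (σ j) = σ j := ae_all_iff.mpr hr2

/-- a function of finitely many coordinates, precomposed with `r`, is measurable -/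
lemma wd_meas [MeasurableSpace E] {β : Type*} [MeasurableSpace β] (r : E → E)
    (hr1 : ∀ s : Set E, MeasurableSet (r ⁻¹' s)) (m0 : MeasurableSpace (ℤ → E))
    (m : ℤ) (k : ℕ) (hm : ∀ j : ℤ, m ≤ j → j < m + k → Measurable[m0] (fun σ : ℤ → E => σ j))
    (g : (Fin k → E) → β) :
    Measurable[m0] (fun σ => g (wd m k (fun j => r (σ j)))) := by
  intro s _
  have : (fun σ : ℤ → E => g (wd m k (fun j => r (σ j)))) ⁻¹' s =
      ⋃ es ∈ g ⁻¹' s, ⋂ j : Fin k, (fun σ : ℤ → E => σ (m + (j : ℕ))) ⁻¹' (r ⁻¹' {es j}) := by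
    ext σ
    simp only [Set.mem_preimage, Set.mem_iUnion, Set.mem_iInter, Set.mem_singleton_iff]
    constructor
    · intro h; exact ⟨_, h, fun j => rfl⟩
    · rintro ⟨es, h, h2⟩
      have : wd m k (fun j => r (σ j)) = es := funext h2
      rwa [this]
  rw [this]
  refine MeasurableSet.biUnion (Set.to_countable _) fun es _ => MeasurableSet.iInter fun j => ?_
  exact hm _ (by omega) (by have := j.2; omega) (hr1 _)

lemma int_wd [MeasurableSpace E] (S : CMS K N E) (μ : Measure K) [IsProbabilityMeasure μ]
    (M : Measure (ℤ → E)) (hM : S.IsGMarkovMeasure μ M) (m : ℤ) (k : ℕ) (g : (Fin k → E) → ℝ) :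
    ∫ σ, g (wd m k σ) ∂M = ∑ es, g es * ∫ x, S.cylWeight x (List.ofFn es) ∂μ := by
  classical
  have := hM.1
  obtain ⟨r, hr1, hr2⟩ := exists_r S μ M hM
  have hae := wd_ae M r hr2
  have hnull : ∀ es : Fin k → E, NullMeasurableSet {σ | wd m k σ = es} M := by
    intro es
    have h1 : MeasurableSet {σ : ℤ → E | wd m k (fun j => r (σ j)) = es} := by
      have := wd_meas (β := Prop) r hr1 inferInstance m k (fun j _ _ => measurable_pi_apply j)
        (fun v => v = es)
      exact measurableSet_setOfPred.mpr this
    refine h1.nullMeasurableSet.congr ?_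
    filter_upwards [hae] with σ hσ
    have : (fun j => r (σ j)) = σ := funext hσ
    exact congrArg (fun s : ℤ → E => wd m k s = es) this
  have h1 : ∀ σ, g (wd m k σ) = ∑ es, Set.indicator {σ | wd m k σ = es} (fun _ => g es) σ := by
    intro σ
    rw [Finset.sum_eq_single (wd m k σ)]
    · simp
    · intro b _ hb
      exact Set.indicator_of_notMem (fun h => hb h.symm) _
    · simp
  simp only [h1]
  rw [integral_finsetSum _ fun es _ =>
    (integrable_const (g es)).indicator₀ (hnull es)]
  refine Finset.sum_congr rfl fun es _ => ?_
  rw [integral_indicator₀ (hnull es), setIntegral_const, smul_eq_mul, mul_comm, Measure.real,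
    M_wd S μ M hM, ENNReal.toReal_ofReal (integral_nonneg (cw_nonneg S _))]


lemma sum_snoc {k : ℕ} (f : (Fin (k + 1) → E) → ℝ) :
    ∑ es, f es = ∑ e, ∑ es : Fin k → E, f (Fin.snoc es e) := by
  rw [← Fintype.sum_prod_type']
  exact (Fintype.sum_equiv (Fin.snocEquiv (fun _ => E)) _ _ (fun _ => rfl)).symm

open Classical in
lemma word_bound [BorelSpace K] [MeasurableSpace E] (S : CMS K N E) (μ : Measure K)
    [IsProbabilityMeasure μ]
    (M : Measure (ℤ → E)) (hM : S.IsGMarkovMeasure μ M)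
    (xs : Fin N → K) (hxs : ∀ i, xs i ∈ S.Ks i)
    (hmom : ∑ i, ∫⁻ x in S.Ks i, ENNReal.ofReal (dist x (xs i)) ∂μ < ⊤)
    (e : E) (ε η : ℝ) (hη : 0 < η) (hε : 0 < ε)
    (h : ∀ x ∈ S.Ks (S.ι e), ∀ y ∈ S.Ks (S.ι e), dist x y < η → dist (S.p e x) (S.p e y) < ε)
    (n : ℕ) (B : (Fin (n + 1) → E) → ℝ) (hB : ∀ v, |B v| ≤ 1) :
    |∫ σ, B (wd (-(n : ℤ)) (n + 1) σ) * (if σ 1 = e then 1 else 0) ∂M -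
      ∫ σ, B (wd (-(n : ℤ)) (n + 1) σ) * S.p e (S.codeSeq xs σ n) ∂M| ≤
      ε + S.a ^ (n + 1) / η * ∫ x, dd S xs x ∂μ := by
  have h1 : ∫ σ, B (wd (-(n : ℤ)) (n + 1) σ) * (if σ 1 = e then 1 else 0) ∂M =
      ∑ es : Fin (n + 1) → E, B es *
        ∫ x, S.cylWeight x (List.ofFn es) * S.p e (fw S x (List.ofFn es)) ∂μ := by
    have := int_wd S μ M hM (-(n : ℤ)) (n + 1 + 1)
      (fun v => B (fun i => v i.castSucc) * (if v (Fin.last _) = e then 1 else 0))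
    have hl : ∀ σ : ℤ → E, wd (-(n : ℤ)) (n + 1 + 1) σ (Fin.last (n + 1)) = σ 1 := by
      intro σ
      simp [wd]
    have hc : ∀ σ : ℤ → E, (fun i : Fin (n + 1) => wd (-(n : ℤ)) (n + 1 + 1) σ i.castSucc) =
        wd (-(n : ℤ)) (n + 1) σ := fun σ => rfl
    simp only [hl, hc] at this
    rw [this, sum_snoc, Finset.sum_comm]
    refine Finset.sum_congr rfl fun es _ => ?_
    rw [Finset.sum_eq_single e]
    · rw [List.ofFn_succ']
      simp only [Fin.snoc_castSucc, Fin.snoc_last, List.concat_eq_append, cw_concat, if_true,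
        mul_one]
    · intro b _ hb
      simp [hb]
    · simp
  have h2 : ∫ σ, B (wd (-(n : ℤ)) (n + 1) σ) * S.p e (S.codeSeq xs σ n) ∂M =
      ∑ es : Fin (n + 1) → E, B es *
        ∫ x, S.cylWeight x (List.ofFn es) * S.p e (hw S xs es) ∂μ := by
    simp only [codeSeq_eq]
    rw [int_wd S μ M hM (-(n : ℤ)) (n + 1) (fun v => B v * S.p e (hw S xs v))]
    refine Finset.sum_congr rfl fun es _ => ?_
    rw [integral_mul_const]
    ring
  have hi1 : ∀ (es : Fin (n + 1) → E) (u : K → ℝ), Measurable u → (∀ x, |u x| ≤ 1) →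
      Integrable (fun x => S.cylWeight x (List.ofFn es) * u x) μ := by
    intro es u hu hb
    refine (cw_int S μ (List.ofFn es)).mul_bdd (c := 1) hu.aestronglyMeasurable
      (Eventually.of_forall fun x => ?_)
    exact hb x
  have hpb : ∀ x, |S.p e x| ≤ 1 := fun x => by
    rw [abs_of_nonneg (S.p_nonneg e x)]; exact p_le_one S e x
  have hm1 : ∀ es : Fin (n + 1) → E, Measurable fun x => S.p e (fw S x (List.ofFn es)) :=
    fun es => (S.p_meas e).comp (fw_meas S _)
  rw [h1, h2, ← Finset.sum_sub_distrib]
  have h3 : ∀ es : Fin (n + 1) → E, |B es *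
        ∫ x, S.cylWeight x (List.ofFn es) * S.p e (fw S x (List.ofFn es)) ∂μ -
      B es * ∫ x, S.cylWeight x (List.ofFn es) * S.p e (hw S xs es) ∂μ| ≤
      ∫ x, S.cylWeight x (List.ofFn es) *
        |S.p e (fw S x (List.ofFn es)) - S.p e (hw S xs es)| ∂μ := by
    intro es
    rw [← mul_sub, ← integral_sub (hi1 es _ (hm1 es) fun x => hpb _)
      (hi1 es _ measurable_const fun x => hpb _), abs_mul]
    refine (mul_le_of_le_one_left (abs_nonneg _) (hB es)).trans ?_
    refine (abs_integral_le_integral_abs).trans (le_of_eq ?_)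
    refine integral_congr_ae (Eventually.of_forall fun x => ?_)
    simp only
    rw [← mul_sub, abs_mul, abs_of_nonneg (cw_nonneg S _ x)]
  refine (Finset.abs_sum_le_sum_abs _ _).trans ((Finset.sum_le_sum fun es _ => h3 es).trans ?_)
  have hi2 : ∀ es : Fin (n + 1) → E, Integrable (fun x => S.cylWeight x (List.ofFn es) *
        |S.p e (fw S x (List.ofFn es)) - S.p e (hw S xs es)|) μ := by
    intro es
    refine hi1 es _ ((hm1 es).sub_const _).abs fun x => ?_
    rw [abs_abs, abs_le]
    constructor <;> linarith [p_le_one S e (fw S x (List.ofFn es)), p_le_one S e (hw S xs es),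
      S.p_nonneg e (fw S x (List.ofFn es)), S.p_nonneg e (hw S xs es)]
  rw [← integral_finsetSum _ fun es _ => hi2 es]
  have hd := dd_int S xs μ hmom
  calc _ ≤ ∫ x, (ε + S.a ^ (n + 1) / η * dd S xs x) ∂μ :=
        integral_mono (integrable_finsetSum _ fun es _ => hi2 es)
          ((integrable_const _).add (hd.const_mul _))
          (fun x => key_pt S xs hxs e ε η hη hε h n x)
    _ = _ := by
        rw [integral_add (integrable_const _) (hd.const_mul _), integral_const_mul]
        simp

lemma p_cont (S : CMS K N E) (hOpen : ∀ i, IsOpen (S.Ks i))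
    (hUC : ∀ e, UniformContinuousOn (S.p e) (S.Ks (S.ι e))) (e : E) : Continuous (S.p e) := by
  rw [continuous_iff_continuousAt]
  intro x
  obtain ⟨i, hi⟩ := exists_cell S x
  by_cases h : i = S.ι e
  · subst h
    exact (hUC e).continuousOn.continuousAt ((hOpen _).mem_nhds hi)
  · have : S.p e =ᶠ[𝓝 x] fun _ => 0 := by
      filter_upwards [(hOpen i).mem_nhds hi] with y hy
      exact S.p_zero e y fun h' => h (cell_unique S hy h')
    exact continuousAt_const.congr this.symm

lemma ae_tendsto [BorelSpace K] [Nonempty K] [MeasurableSpace E] (S : CMS K N E)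
    (hProper : ∀ A : Set K, Bornology.IsBounded A → IsCompact (closure A))
    (M : Measure (ℤ → E)) [IsProbabilityMeasure M] (r : E → E)
    (hr1 : ∀ s : Set E, MeasurableSet (r ⁻¹' s)) (hae : ∀ᵐ σ ∂M, ∀ j : ℤ, r (σ j) = σ j)
    (xs : Fin N → K) (hY : M (S.Yset xs) = 1) :
    ∀ᵐ σ ∂M, Tendsto (S.codeSeq xs σ) atTop (𝓝 (S.F xs σ)) := by
  have : ProperSpace K := ⟨fun x r => by
    have := hProper (Metric.closedBall x r) Metric.isBounded_closedBall
    rwa [Metric.isClosed_closedBall.closure_eq] at this⟩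
  let c : ℕ → (ℤ → E) → K := fun n σ => S.codeSeq xs (fun j => r (σ j)) n
  have hc : ∀ n, Measurable (c n) := by
    intro n
    simp only [c, codeSeq_eq]
    exact wd_meas r hr1 inferInstance _ _ (fun j _ _ => measurable_pi_apply j) _
  have hD := measurableSet_exists_tendsto (l := atTop) hc
  set D' := {σ | ∃ L, Tendsto (fun n => c n σ) atTop (𝓝 L)}
  have hsub : ∀ᵐ σ ∂M, σ ∈ S.Yset xs → σ ∈ D' := by
    filter_upwards [hae] with σ hσ hY
    obtain ⟨τ, hτ, hτσ⟩ := Set.mem_iInter.mp hY 0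
    have : τ = σ := by
      rw [← hτσ]; funext j; simp [shiftZ]
    subst this
    obtain ⟨_, L, hL⟩ := hτ
    refine ⟨L, ?_⟩
    have h0 : (fun j => r (τ j)) = τ := funext hσ
    simp only [c, h0]
    exact hL
  have h1 : M D' = 1 := le_antisymm prob_le_one (by rw [← hY]; exact measure_mono_ae hsub)
  have h2 : ∀ᵐ σ ∂M, σ ∈ D' := (prob_compl_eq_zero_iff hD).mpr h1
  filter_upwards [h2, hae] with σ hσ hσ'
  have h0 : (fun j => r (σ j)) = σ := funext hσ'
  have hσ2 : ∃ L, Tendsto (S.codeSeq xs σ) atTop (𝓝 L) := by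
    obtain ⟨L, hL⟩ := hσ
    simp only [c, h0] at hL
    exact ⟨L, hL⟩
  exact tendsto_nhds_limUnder hσ2

open Classical in
lemma cyl_case [BorelSpace K] [Nonempty K] [MeasurableSpace E] (S : CMS K N E)
    (hOpen : ∀ i, IsOpen (S.Ks i))
    (hUC : ∀ e, UniformContinuousOn (S.p e) (S.Ks (S.ι e)))
    (μ : Measure K) [IsProbabilityMeasure μ]
    (M : Measure (ℤ → E)) (hM : S.IsGMarkovMeasure μ M)
    (xs : Fin N → K) (hxs : ∀ i, xs i ∈ S.Ks i)
    (hmom : ∑ i, ∫⁻ x in S.Ks i, ENNReal.ofReal (dist x (xs i)) ∂μ < ⊤)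
    (r : E → E)
    (hr1 : ∀ s : Set E, MeasurableSet (r ⁻¹' s)) (hae : ∀ᵐ σ ∂M, ∀ j : ℤ, r (σ j) = σ j)
    (hlim : ∀ᵐ σ ∂M, Tendsto (S.codeSeq xs σ) atTop (𝓝 (S.F xs σ)))
    (e : E) (s : Set (ℤ → E)) (hs : MeasurableSet s) (n₀ : ℕ)
    (hdep : ∀ σ τ : ℤ → E, (∀ j : ℤ, -(n₀ : ℤ) ≤ j → j ≤ 0 → σ j = τ j) → (σ ∈ s → τ ∈ s)) :
    ∫ σ in s, S.p e (S.F xs σ) ∂M =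
      ∫ σ in s, Set.indicator {σ : ℤ → E | σ 1 = e} (fun _ => (1 : ℝ)) σ ∂M := by
  have := hM.1
  have hpc := p_cont S hOpen hUC e
  let ext : (n : ℕ) → (Fin (n + 1) → E) → ℤ → E :=
    fun n v j => v (Fin.ofNat (n + 1) (j + n).toNat)
  let B : (n : ℕ) → (Fin (n + 1) → E) → ℝ := fun n v => if ext n v ∈ s then 1 else 0
  have hB : ∀ n, n₀ ≤ n → ∀ σ (u : ℝ),
      B n (wd (-(n : ℤ)) (n + 1) σ) * u = s.indicator (fun _ => u) σ := by
    intro n hn σ u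
    have hag : ∀ j : ℤ, -(n₀ : ℤ) ≤ j → j ≤ 0 → ext n (wd (-(n : ℤ)) (n + 1) σ) j = σ j := by
      intro j h1 h2
      simp only [ext, wd]
      congr 1
      rw [Fin.val_ofNat, Nat.mod_eq_of_lt (by omega)]
      omega
    have : ext n (wd (-(n : ℤ)) (n + 1) σ) ∈ s ↔ σ ∈ s :=
      ⟨hdep _ _ hag, hdep _ _ fun j h1 h2 => (hag j h1 h2).symm⟩
    simp only [B, this, Set.indicator]
    split_ifs <;> simp
  have hB1 : ∀ n v, |B n v| ≤ 1 := by
    intro n v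
    simp only [B]
    split_ifs <;> simp
  -- convergence of the integrals
  have hT : Tendsto (fun n => ∫ σ in s, S.p e (S.codeSeq xs σ n) ∂M) atTop
      (𝓝 (∫ σ in s, S.p e (S.F xs σ) ∂M)) := by
    refine tendsto_integral_of_dominated_convergence (fun _ => 1) (fun n => ?_)
      (integrable_const _) (fun n => Eventually.of_forall fun σ => ?_) ?_
    · have h1 : Measurable fun σ : ℤ → E => S.p e (S.codeSeq xs (fun j => r (σ j)) n) := by
        simp only [codeSeq_eq]
        exact wd_meas r hr1 inferInstance _ _ (fun j _ _ => measurable_pi_apply j)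
          (fun v => S.p e (hw S xs v))
      refine AEStronglyMeasurable.restrict (h1.aestronglyMeasurable.congr ?_)
      filter_upwards [hae] with σ hσ
      have h0 : (fun j => r (σ j)) = σ := funext hσ
      rw [h0]
    · rw [Real.norm_eq_abs, abs_of_nonneg (S.p_nonneg _ _)]
      exact p_le_one S _ _
    · refine ae_restrict_of_ae ?_
      filter_upwards [hlim] with σ hσ
      exact (hpc.tendsto _).comp hσ
  have hT2 : Tendsto (fun n => ∫ σ in s, S.p e (S.codeSeq xs σ n) ∂M) atTop
      (𝓝 (∫ σ in s, Set.indicator {σ : ℤ → E | σ 1 = e} (fun _ => (1 : ℝ)) σ ∂M)) := by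
    rw [Metric.tendsto_atTop]
    intro ε hε
    obtain ⟨η, hη, h⟩ := Metric.uniformContinuousOn_iff.mp (hUC e) (ε / 2) (by positivity)
    have hlim0 : Tendsto (fun n : ℕ => S.a ^ (n + 1) / η * ∫ x, dd S xs x ∂μ) atTop (𝓝 0) := by
      have h1 := (tendsto_add_atTop_iff_nat 1).mpr
        (tendsto_pow_atTop_nhds_zero_of_lt_one S.a_pos.le S.a_lt_one)
      simpa using (h1.div_const η).mul_const (∫ x, dd S xs x ∂μ)
    obtain ⟨n₁, hn₁⟩ := eventually_atTop.mp (hlim0.eventually_lt_const (half_pos hε))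
    refine ⟨max n₀ n₁, fun n hn => ?_⟩
    have hb := word_bound S μ M hM xs hxs hmom e (ε / 2) η hη (by positivity) h n (B n) (hB1 n)
    have hn0 : n₀ ≤ n := le_trans (le_max_left _ _) hn
    simp only [hB n hn0] at hb
    have e1 : ∀ f : (ℤ → E) → ℝ, ∫ σ, s.indicator (fun _ => f σ) σ ∂M = ∫ σ in s, f σ ∂M := by
      intro f
      rw [← integral_indicator hs]
      rfl
    rw [e1 (fun σ => if σ 1 = e then 1 else 0), e1 (fun σ => S.p e (S.codeSeq xs σ n))] at hb
    have e2 : (fun σ : ℤ → E => Set.indicator {σ : ℤ → E | σ 1 = e} (fun _ => (1 : ℝ)) σ) =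
        fun σ => if σ 1 = e then 1 else 0 := by
      funext σ
      simp [Set.indicator]
    rw [dist_comm, Real.dist_eq, e2]
    have := hn₁ n (le_trans (le_max_right _ _) hn)
    linarith
  exact tendsto_nhds_unique hT hT2

end CMSProof

-- stmt 14
theorem cms_condexp_eq_p_comp_F
    {K : Type*} [MetricSpace K] [MeasurableSpace K] [BorelSpace K] [Nonempty K]
    {N : ℕ} {E : Type*} [Fintype E] [MeasurableSpace E] (S : CMS K N E)
    (hProper : ∀ A : Set K, Bornology.IsBounded A → IsCompact (closure A))
    (hOpen : ∀ i, IsOpen (S.Ks i))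
    (hUC : ∀ e, UniformContinuousOn (S.p e) (S.Ks (S.ι e)))
    (δ : ℝ) (hδ : 0 < δ) (hp : ∀ e, ∀ x ∈ S.Ks (S.ι e), δ ≤ S.p e x)
    (μ : Measure K) (hμ : IsProbabilityMeasure μ) (hinv : S.adjoint μ = μ)
    (M : Measure (ℤ → E)) (hM : S.IsGMarkovMeasure μ M)
    (xs : Fin N → K) (hxs : ∀ i, xs i ∈ S.Ks i)
    (hmom : ∑ i, ∫⁻ x in S.Ks i, ENNReal.ofReal (dist x (xs i)) ∂μ < ⊤)
    (hY : M (S.Yset xs) = 1) :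
    ∀ e : E,
      (M[Set.indicator {σ : ℤ → E | σ 1 = e} (fun _ => (1 : ℝ)) | pastAlg E])
        =ᵐ[M] fun σ => S.p e (S.F xs σ) := by
  classical
  intro e
  have hMp := hM.1
  obtain ⟨r, hr1, hr2⟩ := CMSProof.exists_r S μ M hM
  have hae := CMSProof.wd_ae M r hr2
  have hlim := CMSProof.ae_tendsto S hProper M r hr1 hae xs hY
  have hpc := CMSProof.p_cont S hOpen hUC e
  let ρ : (ℤ → E) → ({j : ℤ // j ≤ 0} → E) := fun σ j => σ j.1
  have hρ : Measurable ρ := measurable_pi_lambda _ fun j => measurable_pi_apply _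
  have hle : pastAlg E ≤ (MeasurableSpace.pi : MeasurableSpace (ℤ → E)) := hρ.comap_le
  -- integrability of the indicator
  have hind : Integrable (Set.indicator {σ : ℤ → E | σ 1 = e} (fun _ => (1 : ℝ))) M := by
    have h1 : MeasurableSet {σ : ℤ → E | r (σ 1) = e} := (measurable_pi_apply (1 : ℤ) : Measurable fun σ : ℤ → E => σ 1) (hr1 {e})
    refine ((integrable_const (1 : ℝ)).indicator h1).congr ?_
    filter_upwards [hae] with σ hσ
    simp [Set.indicator, hσ 1]
  -- measurability of the candidate
  have hgm : AEStronglyMeasurable[pastAlg E] (fun σ => S.p e (S.F xs σ)) M := by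
    have hm : ∀ n : ℕ, Measurable[pastAlg E]
        fun σ : ℤ → E => S.p e (S.codeSeq xs (fun j => r (σ j)) n) := by
      intro n
      simp only [CMSProof.codeSeq_eq]
      refine CMSProof.wd_meas r hr1 (pastAlg E) _ _ (fun j _ hj => ?_)
        (fun v => S.p e (CMSProof.hw S xs v))
      have hj0 : j ≤ 0 := by push_cast at hj; omega
      exact (measurable_pi_apply (⟨j, hj0⟩ : {j : ℤ // j ≤ 0})).comp (comap_measurable ρ)
    have hls := Measurable.limsup hm
    refine ⟨_, hls.stronglyMeasurable, ?_⟩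
    filter_upwards [hae, hlim] with σ hσ hσ2
    have h0 : (fun j => r (σ j)) = σ := funext hσ
    simp only [h0]
    exact (((hpc.tendsto _).comp hσ2).limsup_eq).symm
  have hgi : Integrable (fun σ => S.p e (S.F xs σ)) M := by
    refine Integrable.of_bound (hgm.mono hle) 1 (Eventually.of_forall fun σ => ?_)
    rw [Real.norm_eq_abs, abs_of_nonneg (S.p_nonneg _ _)]
    exact CMSProof.p_le_one S _ _
  have hcyl := CMSProof.cyl_case S hOpen hUC μ M hM xs hxs hmom r hr1 hae hlim e
  have huniv : ∫ σ, S.p e (S.F xs σ) ∂M =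
      ∫ σ, Set.indicator {σ : ℤ → E | σ 1 = e} (fun _ => (1 : ℝ)) σ ∂M := by
    simpa using hcyl Set.univ MeasurableSet.univ 0 (fun _ _ _ _ => trivial)
  refine (ae_eq_condExp_of_forall_setIntegral_eq hle hind
    (fun s _ _ => hgi.integrableOn) ?_ hgm).symm
  rintro s ⟨t, ht, rfl⟩ -
  change ∫ σ in ρ ⁻¹' t, _ ∂M = ∫ σ in ρ ⁻¹' t, _ ∂M
  induction t, ht using MeasurableSpace.induction_on_inter
    generateFrom_measurableCylinders.symm isPiSystem_measurableCylinders with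
  | empty => simp
  | basic t ht =>
    obtain ⟨I, T, hT, rfl⟩ := (mem_measurableCylinders _).mp ht
    obtain ⟨n₀, hn₀⟩ : ∃ n₀ : ℕ, ∀ j ∈ I, -(n₀ : ℤ) ≤ j.1 := by
      refine ⟨I.sup fun j => (-j.1).toNat, fun j hj => ?_⟩
      have := Finset.le_sup (f := fun j : {j : ℤ // j ≤ 0} => (-j.1).toNat) hj
      omega
    refine hcyl _ (hρ hT.cylinder) n₀ fun σ τ hστ hσ => ?_
    have : I.restrict (ρ τ) = I.restrict (ρ σ) := by
      funext j
      exact (hστ j.1.1 (hn₀ _ j.2) j.1.2).symm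
    simp only [Set.mem_preimage, mem_cylinder] at hσ ⊢
    rwa [this]
  | compl t ht ih =>
    rw [Set.preimage_compl, setIntegral_compl (hρ ht) hgi, setIntegral_compl (hρ ht) hind, ih, huniv]
  | iUnion f hd hf ih =>
    rw [Set.preimage_iUnion, integral_iUnion (fun i => hρ (hf i)) _ hgi.integrableOn,
      integral_iUnion (fun i => hρ (hf i)) _ hind.integrableOn]
    · simp only [ih]
    · exact fun i j hij => (hd hij).preimage ρ
    · exact fun i j hij => (hd hij).preimage ρ
end
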